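/- Let 0 < β ≤ ∞, 0 < δ ≤ 1, and let T : M⁺ → M⁺ satisfy the quasilinearity conditions (i)–(iii). Let v, w be weights with V(x) = ∫₀ˣ v < ∞ for all x > 0. Then the inequality ‖T(∫₀ˣ h)‖_{L^β(w)} ≤ C ∫₀^∞ h V^{-1} holds for all nonnegative measurable h if and only if the inequality ‖T_{V^{2(1-1/δ)}}((∫₀ˣ h^δ V)^{1/δ})‖_{L^β(w)} ≤ C' ∫₀^∞ h v^{1-1/δ} holds for all nonnegative measurable h, where T_u(g) := T(g·u); moreover the best constants are equivalent. -/

import Mathlib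

open MeasureTheory ENNReal Set
open scoped ENNReal

/-- The weighted Lebesgue "norm" `‖f‖_{β,w,(0,∞)}` with `β ∈ (0,∞]`. -/
noncomputable def Lnorm (β : ℝ≥0∞) (w f : ℝ → ℝ≥0∞) : ℝ≥0∞ :=
  if β = ∞ then essSup (fun x => f x * w x) (volume.restrict (Ioi (0:ℝ)))
  else (∫⁻ x in Ioi (0:ℝ), f x ^ β.toReal * w x) ^ (1 / β.toReal)

/-- `V(x) = ∫₀ˣ v`. -/
noncomputable def Vint (v : ℝ → ℝ≥0∞) (x : ℝ) : ℝ≥0∞ := ∫⁻ t in Ioc (0:ℝ) x, v t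

theorem Vint_mono (v : ℝ → ℝ≥0∞) : Monotone (Vint v) := fun _ _ h =>
  lintegral_mono_set (Ioc_subset_Ioc_right h)

theorem lemB (v : ℝ → ℝ≥0∞) (b : ℝ≥0∞) :
    ∫⁻ y in {y : ℝ | 0 < y ∧ Vint v y ≤ b}, v y ≤ b := by
  by_cases hm : ∃ m, (0 < m ∧ Vint v m ≤ b) ∧ ∀ y, 0 < y ∧ Vint v y ≤ b → y ≤ m
  · obtain ⟨m, hm, hmax⟩ := hm
    have hsub : {y : ℝ | 0 < y ∧ Vint v y ≤ b} ⊆ Ioc 0 m := fun y hy => ⟨hy.1, hmax y hy⟩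
    exact (lintegral_mono_set hsub).trans hm.2
  · push Not at hm
    have hsub : {y : ℝ | 0 < y ∧ Vint v y ≤ b} ⊆
        ⋃ q : {q : ℚ // (0:ℝ) < q ∧ Vint v q ≤ b}, Ioc (0:ℝ) ((q : ℚ) : ℝ) := by
      intro y hy
      obtain ⟨z, hz, hyz⟩ := hm y hy
      obtain ⟨q, h1, h2⟩ := exists_rat_btwn hyz
      refine mem_iUnion.2 ⟨⟨q, hy.1.trans h1, (Vint_mono v h2.le).trans hz.2⟩, hy.1, h1.le⟩
    refine (lintegral_mono_set hsub).trans ?_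
    rw [setLIntegral_iUnion_of_directed]
    · exact iSup_le fun q => q.2.2
    · intro p q
      rcases le_total (p : ℚ) (q : ℚ) with h | h
      · exact ⟨q, Ioc_subset_Ioc_right (by exact_mod_cast h), subset_rfl⟩
      · exact ⟨p, subset_rfl, Ioc_subset_Ioc_right (by exact_mod_cast h)⟩

theorem ptw (s x : ℝ≥0∞) (hs : s ≠ 0) (hx : x ≠ ∞) :
    (if s ≤ x then (x ^ 2)⁻¹ else 0) ≤
      ∑' n : ℕ, (if x ≤ s * 2 ^ (n+1) then ((s * 2 ^ n) ^ 2)⁻¹ else 0) := by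
  split_ifs with h
  · have hs' : s ≠ ∞ := ne_top_of_le_ne_top hx h
    lift s to NNReal using hs'
    lift x to NNReal using hx
    have hs0 : 0 < s := by
      rw [pos_iff_ne_zero]; exact_mod_cast hs
    have h' : s ≤ x := by exact_mod_cast h
    obtain ⟨n, h1, h2⟩ := exists_nat_pow_near (x := x / s) (y := (2 : NNReal))
      ((one_le_div hs0).2 h') (by norm_num)
    rw [le_div_iff₀ hs0] at h1
    rw [div_lt_iff₀ hs0] at h2
    refine le_trans ?_ (ENNReal.le_tsum n)
    rw [if_pos]
    · apply ENNReal.inv_le_inv.2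
      have : s * 2 ^ n ≤ x := by rwa [mul_comm]
      exact_mod_cast pow_le_pow_left' this 2
    · have : x ≤ s * 2 ^ (n+1) := by rw [mul_comm]; exact h2.le
      exact_mod_cast this
  · exact zero_le

theorem lemA (v : ℝ → ℝ≥0∞) (hv : Measurable v) (hVfin : ∀ x > (0:ℝ), Vint v x < ∞)
    (s : ℝ≥0∞) (hs' : s ≠ ∞) :
    ∫⁻ y in Ioi (0:ℝ), (if s ≤ Vint v y then (Vint v y ^ 2)⁻¹ else 0) * v y ≤ 4 / s := by
  rcases eq_or_ne s 0 with rfl | hs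
  · rw [ENNReal.div_zero (by norm_num)]
    exact le_top
  have hVm : Measurable (Vint v) := (Vint_mono v).measurable
  calc ∫⁻ y in Ioi (0:ℝ), (if s ≤ Vint v y then (Vint v y ^ 2)⁻¹ else 0) * v y
      ≤ ∫⁻ y in Ioi (0:ℝ), ∑' n : ℕ,
        (if Vint v y ≤ s * 2 ^ (n+1) then ((s * 2 ^ n) ^ 2)⁻¹ else 0) * v y := by
        refine setLIntegral_mono' measurableSet_Ioi fun y hy => ?_
        rw [ENNReal.tsum_mul_right]
        gcongr
        exact ptw s _ hs (hVfin y hy).ne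
    _ = ∑' n : ℕ, ∫⁻ y in Ioi (0:ℝ),
        (if Vint v y ≤ s * 2 ^ (n+1) then ((s * 2 ^ n) ^ 2)⁻¹ else 0) * v y := by
        refine lintegral_tsum fun n => ?_
        exact ((Measurable.ite (measurableSet_le hVm measurable_const) measurable_const
          measurable_const).mul hv).aemeasurable
    _ ≤ ∑' n : ℕ, (2 / s) * (2⁻¹) ^ n := by
        refine ENNReal.tsum_le_tsum fun n => ?_
        have hm : MeasurableSet {y : ℝ | Vint v y ≤ s * 2 ^ (n+1)} :=
          measurableSet_le hVm measurable_const
        calc ∫⁻ y in Ioi (0:ℝ),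
              (if Vint v y ≤ s * 2 ^ (n+1) then ((s * 2 ^ n) ^ 2)⁻¹ else 0) * v y
            = ∫⁻ y in Ioi (0:ℝ), {y : ℝ | Vint v y ≤ s * 2 ^ (n+1)}.indicator
                (fun y => ((s * 2 ^ n) ^ 2)⁻¹ * v y) y := by
              refine lintegral_congr fun y => ?_
              by_cases h : Vint v y ≤ s * 2 ^ (n+1) <;> simp [indicator, h]
          _ = ((s * 2 ^ n) ^ 2)⁻¹ * ∫⁻ y in {y : ℝ | 0 < y ∧ Vint v y ≤ s * 2 ^ (n+1)}, v y := by
              rw [lintegral_indicator hm, Measure.restrict_restrict hm, lintegral_const_mul _ hv,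
                inter_comm]
              rfl
          _ ≤ ((s * 2 ^ n) ^ 2)⁻¹ * (s * 2 ^ (n+1)) := by gcongr; exact lemB v _
          _ = (2 / s) * (2⁻¹) ^ n := by
              have h2 : (2:ℝ≥0∞) ^ n ≠ 0 := by simp
              have h2' : (2:ℝ≥0∞) ^ n ≠ ∞ := by simp
              have h3 : s * 2 ^ n ≠ 0 := mul_ne_zero hs h2
              have h3' : s * 2 ^ n ≠ ∞ := ENNReal.mul_ne_top hs' h2'
              rw [pow_two, ENNReal.mul_inv (Or.inl h3) (Or.inl h3'), pow_succ, ← mul_assoc s,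
                mul_assoc, ← mul_assoc (s * 2^n)⁻¹ (s * 2^n), ENNReal.inv_mul_cancel h3 h3',
                one_mul, ENNReal.mul_inv (Or.inl hs) (Or.inl hs'), ENNReal.inv_pow, div_eq_mul_inv]
              ring
    _ = 4 / s := by
        rw [ENNReal.tsum_mul_left, ENNReal.tsum_geometric, ENNReal.one_sub_inv_two, inv_inv,
          div_eq_mul_inv, div_eq_mul_inv]
        ring

theorem lemC (v : ℝ → ℝ≥0∞) (hVfin : ∀ x > (0:ℝ), Vint v x < ∞) (x : ℝ) (hx : 0 < x) :
    Vint v x / 2 ≤ ∫⁻ y in Ioc (0:ℝ) x ∩ {y | Vint v x / 2 ≤ Vint v y}, v y := by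
  have hVm : Measurable (Vint v) := (Vint_mono v).measurable
  have hm : MeasurableSet {y | Vint v x / 2 ≤ Vint v y} := measurableSet_le measurable_const hVm
  have h1 := lintegral_inter_add_sdiff (μ := volume) v (Ioc (0:ℝ) x) hm
  have h2 : ∫⁻ y in Ioc (0:ℝ) x \ {y | Vint v x / 2 ≤ Vint v y}, v y ≤ Vint v x / 2 := by
    refine (lintegral_mono_set ?_).trans (lemB v (Vint v x / 2))
    rintro y ⟨hy, hy'⟩
    exact ⟨hy.1, (not_le.1 hy').le⟩
  have h3 : Vint v x / 2 + Vint v x / 2 ≤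
      (∫⁻ y in Ioc (0:ℝ) x ∩ {y | Vint v x / 2 ≤ Vint v y}, v y) + Vint v x / 2 := by
    rw [ENNReal.add_halves]
    calc Vint v x = _ := h1.symm
      _ ≤ _ := by gcongr
  exact (ENNReal.add_le_add_iff_right (ENNReal.div_lt_top (hVfin x hx).ne (by simp)).ne).1 h3

theorem Lnorm_le (β : ℝ≥0∞) (hβ : 0 < β) (w f g : ℝ → ℝ≥0∞) (c : ℝ≥0∞) (hc : c ≠ ∞)
    (h : ∀ᵐ x ∂(volume.restrict (Ioi (0:ℝ))), f x ≤ c * g x) :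
    Lnorm β w f ≤ c * Lnorm β w g := by
  unfold Lnorm
  split_ifs with hb
  · rw [← ENNReal.essSup_const_mul]
    refine essSup_mono_ae ?_
    filter_upwards [h] with x hx
    rw [← mul_assoc]
    gcongr
  · have hp : 0 < β.toReal := ENNReal.toReal_pos hβ.ne' hb
    have : c = (c ^ β.toReal) ^ (1 / β.toReal) := by
      rw [← ENNReal.rpow_mul, mul_one_div_cancel hp.ne', ENNReal.rpow_one]
    conv_rhs => rw [this]
    rw [← ENNReal.mul_rpow_of_nonneg _ _ (by positivity),
      ← lintegral_const_mul' _ _ (ENNReal.rpow_ne_top_of_nonneg hp.le hc)]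
    gcongr ?_ ^ _
    refine lintegral_mono_ae ?_
    filter_upwards [h] with x hx
    rw [← mul_assoc, ← ENNReal.mul_rpow_of_nonneg _ _ hp.le]
    gcongr

theorem ae_fin (v : ℝ → ℝ≥0∞) (hv : Measurable v) (hVfin : ∀ x > (0:ℝ), Vint v x < ∞) :
    ∀ᵐ x ∂(volume.restrict (Ioi (0:ℝ))), v x < ∞ := by
  have : Ioi (0:ℝ) ⊆ ⋃ n : ℕ, Ioc (0:ℝ) ((n:ℝ)+1) := by
    intro x hx
    obtain ⟨n, hn⟩ := exists_nat_ge x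
    exact mem_iUnion.2 ⟨n, hx, hn.trans (by simp)⟩
  refine ae_restrict_of_ae_restrict_of_subset this ?_
  rw [ae_restrict_iUnion_iff]
  intro n
  exact ae_lt_top hv (hVfin _ (by positivity)).ne

/-- Forward pointwise bound. -/
theorem fwd (δ : ℝ) (hδ : 0 < δ) (hδ1 : δ ≤ 1) (v h : ℝ → ℝ≥0∞) (hv : Measurable v)
    (hh : Measurable h) (hVfin : ∀ x > (0:ℝ), Vint v x < ∞)
    (hfin : ∫⁻ t in Ioi (0:ℝ), h t * v t ^ (1 - 1/δ) ≠ ∞) (x : ℝ) (hx : 0 < x) :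
    (∫⁻ t in Ioc (0:ℝ) x, h t ^ δ * Vint v t) ^ (1/δ) * (Vint v x) ^ (2*(1 - 1/δ)) ≤
      ∫⁻ t in Ioc (0:ℝ) x, h t * v t ^ (1 - 1/δ) * Vint v t := by
  have hVm : Measurable (Vint v) := (Vint_mono v).measurable
  have hkm : Measurable fun t => h t * v t ^ (1 - 1/δ) := hh.mul (hv.pow_const _)
  have hae : ∀ᵐ t ∂(volume.restrict (Ioc (0:ℝ) x)),
      h t ^ δ * Vint v t = (h t * v t ^ (1 - 1/δ) * Vint v t) ^ δ * (v t * Vint v t) ^ (1 - δ) := by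
    refine ae_restrict_of_ae_restrict_of_subset (t := Ioi (0:ℝ)) (fun y hy => hy.1) ?_
    filter_upwards [ae_fin v hv hVfin, ae_lt_top hkm hfin, ae_restrict_mem measurableSet_Ioi]
      with t h1 h2 h3
    have hV := hVfin t h3
    rcases eq_or_ne (Vint v t) 0 with h0 | h0
    · simp [h0, hδ]
    have e : Vint v t ^ δ * Vint v t ^ (1 - δ) = Vint v t := by
      rw [← ENNReal.rpow_add _ _ h0 hV.ne]; simp
    rw [ENNReal.mul_rpow_of_nonneg _ _ hδ.le, ENNReal.mul_rpow_of_nonneg _ _ hδ.le,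
      ENNReal.mul_rpow_of_nonneg _ _ (sub_nonneg.2 hδ1)]
    have e2 : h t ^ δ * (v t ^ (1 - 1/δ)) ^ δ * v t ^ (1 - δ) = h t ^ δ := by
      rcases eq_or_ne (v t) 0 with hv0 | hv0
      · rcases hδ1.eq_or_lt with rfl | hlt
        · simp
        have hneg : 1 - 1/δ < 0 := by
          rw [sub_neg, lt_div_iff₀ hδ]; linarith
        have : h t = 0 := by
          by_contra hne
          rw [hv0, ENNReal.zero_rpow_of_neg hneg, ENNReal.mul_top hne] at h2
          exact lt_irrefl _ h2
        simp [this, hδ]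
      · rw [← ENNReal.rpow_mul, mul_assoc, ← ENNReal.rpow_add _ _ hv0 h1.ne]
        have : (1 - 1/δ) * δ + (1 - δ) = 0 := by field_simp; ring
        rw [this]; simp
    calc h t ^ δ * Vint v t
        = (h t ^ δ * (v t ^ (1 - 1/δ)) ^ δ * v t ^ (1 - δ)) *
          (Vint v t ^ δ * Vint v t ^ (1 - δ)) := by rw [e, e2]
      _ = _ := by ring
  rw [lintegral_congr_ae hae]
  have hH := ENNReal.lintegral_mul_norm_pow_le (μ := volume.restrict (Ioc (0:ℝ) x))
    (f := fun t => h t * v t ^ (1 - 1/δ) * Vint v t) (g := fun t => v t * Vint v t)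
    (hkm.mul hVm).aemeasurable (hv.mul hVm).aemeasurable hδ.le (sub_nonneg.2 hδ1) (by ring)
  have hvV : ∫⁻ t in Ioc (0:ℝ) x, v t * Vint v t ≤ Vint v x ^ (2:ℝ) := by
    calc ∫⁻ t in Ioc (0:ℝ) x, v t * Vint v t ≤ ∫⁻ t in Ioc (0:ℝ) x, v t * Vint v x := by
          refine setLIntegral_mono' measurableSet_Ioc fun t ht => ?_
          gcongr
          exact Vint_mono v ht.2
      _ = Vint v x ^ (2:ℝ) := by
          rw [lintegral_mul_const _ hv, ENNReal.rpow_two, pow_two]; rfl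
  have hV := hVfin x hx
  set A := ∫⁻ t in Ioc (0:ℝ) x, h t * v t ^ (1 - 1/δ) * Vint v t with hA
  rcases eq_or_ne (Vint v x) 0 with h0 | h0
  · have : ∫⁻ t in Ioc (0:ℝ) x, (h t * v t ^ (1 - 1/δ) * Vint v t) ^ δ *
        (v t * Vint v t) ^ (1 - δ) = 0 := by
      rw [setLIntegral_congr_fun (g := fun _ => 0) measurableSet_Ioc]
      · simp
      · intro t ht
        have : Vint v t = 0 := le_antisymm (h0 ▸ Vint_mono v ht.2) zero_le
        simp [this, hδ]
    rw [this, ENNReal.zero_rpow_of_pos (by positivity), zero_mul]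
    exact zero_le
  calc _ ≤ (A ^ δ * (Vint v x ^ (2:ℝ)) ^ (1 - δ)) ^ (1/δ) * (Vint v x) ^ (2*(1 - 1/δ)) := by
        gcongr
        refine hH.trans ?_
        gcongr
    _ = A := by
        rw [ENNReal.mul_rpow_of_nonneg _ _ (by positivity), ← ENNReal.rpow_mul, ← ENNReal.rpow_mul,
          ← ENNReal.rpow_mul, mul_one_div_cancel hδ.ne', ENNReal.rpow_one, mul_assoc,
          ← ENNReal.rpow_add _ _ h0 hV.ne]
        have : 2 * ((1 - δ) * (1/δ)) + 2 * (1 - 1/δ) = 0 := by field_simp; ring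
        rw [this]; simp

noncomputable def gfun (v h : ℝ → ℝ≥0∞) (y : ℝ) : ℝ≥0∞ :=
  ∫⁻ t in Ioi (0:ℝ), (if Vint v t / 2 ≤ Vint v y then (Vint v y ^ 2)⁻¹ else 0) * h t

theorem gmeas_aux (v h : ℝ → ℝ≥0∞) (hh : Measurable h) :
    Measurable fun p : ℝ × ℝ =>
      (if Vint v p.2 / 2 ≤ Vint v p.1 then (Vint v p.1 ^ 2)⁻¹ else 0) * h p.2 := by
  have hVm : Measurable (Vint v) := (Vint_mono v).measurable
  refine Measurable.mul (Measurable.ite (measurableSet_le ?_ ?_) ?_ measurable_const) ?_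
  · exact (hVm.comp measurable_snd).div_const 2
  · exact hVm.comp measurable_fst
  · exact ((hVm.comp measurable_fst).pow_const 2).inv
  · exact hh.comp measurable_snd

theorem gmeas (v h : ℝ → ℝ≥0∞) (hh : Measurable h) : Measurable (gfun v h) :=
  (gmeas_aux v h hh).lintegral_prod_right'

theorem gint (v h : ℝ → ℝ≥0∞) (hv : Measurable v) (hh : Measurable h)
    (hVfin : ∀ x > (0:ℝ), Vint v x < ∞) :
    ∫⁻ y in Ioi (0:ℝ), gfun v h y * v y ≤ 8 * ∫⁻ t in Ioi (0:ℝ), h t / Vint v t := by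
  have hm := gmeas_aux v h hh
  calc ∫⁻ y in Ioi (0:ℝ), gfun v h y * v y
      = ∫⁻ y in Ioi (0:ℝ), ∫⁻ t in Ioi (0:ℝ),
        (if Vint v t / 2 ≤ Vint v y then (Vint v y ^ 2)⁻¹ else 0) * h t * v y := by
        refine lintegral_congr fun y => ?_
        rw [lintegral_mul_const]
        · rfl
        · exact hm.comp (measurable_prodMk_left (x := y))
    _ = ∫⁻ t in Ioi (0:ℝ), ∫⁻ y in Ioi (0:ℝ),
        (if Vint v t / 2 ≤ Vint v y then (Vint v y ^ 2)⁻¹ else 0) * h t * v y :=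
        lintegral_lintegral_swap (hm.mul (hv.comp measurable_fst)).aemeasurable
    _ ≤ ∫⁻ t in Ioi (0:ℝ), 8 * (h t / Vint v t) := by
        refine setLIntegral_mono' measurableSet_Ioi fun t ht => ?_
        have hVm : Measurable (Vint v) := (Vint_mono v).measurable
        have := lemA v hv hVfin (Vint v t / 2) (ENNReal.div_lt_top (hVfin t ht).ne (by simp)).ne
        calc _ = h t * ∫⁻ y in Ioi (0:ℝ),
              (if Vint v t / 2 ≤ Vint v y then (Vint v y ^ 2)⁻¹ else 0) * v y := by
              rw [← lintegral_const_mul]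
              · refine lintegral_congr fun y => ?_
                ring
              · exact (Measurable.ite (measurableSet_le measurable_const hVm)
                  (hVm.pow_const 2).inv measurable_const).mul hv
          _ ≤ h t * (4 / (Vint v t / 2)) := by gcongr
          _ = 8 * (h t / Vint v t) := by
              rw [div_eq_mul_inv, div_eq_mul_inv, div_eq_mul_inv,
                ENNReal.mul_inv (Or.inr (by simp)) (Or.inr (by simp)), inv_inv]
              ring
    _ = _ := lintegral_const_mul' _ _ (by simp)

/-- Backward pointwise bound. -/
theorem bwd (δ : ℝ) (hδ : 0 < δ) (v h : ℝ → ℝ≥0∞) (hv : Measurable v)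
    (hh : Measurable h) (hVfin : ∀ x > (0:ℝ), Vint v x < ∞)
    (hfin : ∫⁻ t in Ioi (0:ℝ), h t / Vint v t ≠ ∞) (x : ℝ) (hx : 0 < x) :
    ∫⁻ t in Ioc (0:ℝ) x, h t ≤ 4 ^ (1/δ) *
      ((∫⁻ t in Ioc (0:ℝ) x, (gfun v h t * v t ^ (1/δ)) ^ δ * Vint v t) ^ (1/δ) *
        (Vint v x) ^ (2*(1 - 1/δ))) := by
  have hVm : Measurable (Vint v) := (Vint_mono v).measurable
  have hV := hVfin x hx
  rcases eq_or_ne (Vint v x) 0 with h0 | h0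
  · have : ∫⁻ t in Ioc (0:ℝ) x, h t = 0 := by
      rw [lintegral_eq_zero_iff hh]
      have h1 : ∀ᵐ t ∂(volume.restrict (Ioc (0:ℝ) x)), h t / Vint v t < ∞ :=
        ae_restrict_of_ae_restrict_of_subset (t := Ioi (0:ℝ)) (fun y hy => hy.1)
          (ae_lt_top (hh.div hVm) hfin)
      filter_upwards [h1, ae_restrict_mem measurableSet_Ioc] with t ht ht'
      have : Vint v t = 0 := le_antisymm (h0 ▸ Vint_mono v ht'.2) zero_le
      rw [this] at ht
      by_contra hne
      rw [ENNReal.div_zero hne] at ht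
      exact lt_irrefl _ ht
    rw [this]; exact zero_le
  set F := ∫⁻ t in Ioc (0:ℝ) x, h t with hF
  set S := Ioc (0:ℝ) x ∩ {y | Vint v x / 2 ≤ Vint v y} with hS
  have hSm : MeasurableSet S :=
    measurableSet_Ioc.inter (measurableSet_le measurable_const hVm)
  have key : (F * (Vint v x ^ 2)⁻¹) ^ δ * (Vint v x / 2) * (Vint v x / 2) ≤
      ∫⁻ t in Ioc (0:ℝ) x, (gfun v h t * v t ^ (1/δ)) ^ δ * Vint v t := by
    calc (F * (Vint v x ^ 2)⁻¹) ^ δ * (Vint v x / 2) * (Vint v x / 2)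
        ≤ (F * (Vint v x ^ 2)⁻¹) ^ δ * (Vint v x / 2) * ∫⁻ y in S, v y := by
          gcongr; exact lemC v hVfin x hx
      _ = ∫⁻ y in S, (F * (Vint v x ^ 2)⁻¹) ^ δ * (Vint v x / 2) * v y :=
          (lintegral_const_mul _ hv).symm
      _ ≤ ∫⁻ t in S, (gfun v h t * v t ^ (1/δ)) ^ δ * Vint v t := by
          refine setLIntegral_mono' hSm fun y hy => ?_
          have hyV : Vint v y ≤ Vint v x := Vint_mono v hy.1.2
          have hy2 : Vint v x / 2 ≤ Vint v y := hy.2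
          have hg : F * (Vint v x ^ 2)⁻¹ ≤ gfun v h y := by
            calc F * (Vint v x ^ 2)⁻¹ = ∫⁻ t in Ioc (0:ℝ) x, h t * (Vint v x ^ 2)⁻¹ :=
                  (lintegral_mul_const _ hh).symm
              _ ≤ ∫⁻ t in Ioc (0:ℝ) x,
                  (if Vint v t / 2 ≤ Vint v y then (Vint v y ^ 2)⁻¹ else 0) * h t := by
                  refine setLIntegral_mono' measurableSet_Ioc fun t ht => ?_
                  rw [if_pos ((ENNReal.div_le_div_right (Vint_mono v ht.2) 2).trans hy2), mul_comm]
                  gcongr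
              _ ≤ gfun v h y := lintegral_mono_set fun t ht => ht.1
          rw [ENNReal.mul_rpow_of_nonneg (gfun v h y) _ hδ.le, ← ENNReal.rpow_mul,
            one_div_mul_cancel hδ.ne', ENNReal.rpow_one, mul_right_comm]
          gcongr
      _ ≤ _ := lintegral_mono_set inter_subset_left
  calc F = 4 ^ (1/δ) * (((F * (Vint v x ^ 2)⁻¹) ^ δ * (Vint v x / 2) * (Vint v x / 2)) ^ (1/δ) *
        (Vint v x) ^ (2*(1 - 1/δ))) := by
        have e4 : (4:ℝ≥0∞) * ((F * (Vint v x ^ 2)⁻¹) ^ δ * (Vint v x / 2) * (Vint v x / 2)) =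
            (F * (Vint v x ^ 2)⁻¹) ^ δ * Vint v x ^ (2:ℝ) := by
          have : (4:ℝ≥0∞) = 2 * 2 := by norm_num
          rw [this, ENNReal.rpow_two]
          calc _ = (F * (Vint v x ^ 2)⁻¹) ^ δ * (2 * (Vint v x / 2)) * (2 * (Vint v x / 2)) := by
                ring
            _ = _ := by rw [ENNReal.mul_div_cancel (by simp) (by simp)]; ring
        rw [← mul_assoc, ← ENNReal.mul_rpow_of_nonneg _ _ (by positivity), e4,
          ENNReal.mul_rpow_of_nonneg _ _ (by positivity), ← ENNReal.rpow_mul, ← ENNReal.rpow_mul,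
          mul_one_div_cancel hδ.ne', ENNReal.rpow_one, mul_assoc, mul_assoc,
          ← ENNReal.rpow_add _ _ h0 hV.ne]
        have : 2 * (1/δ) + 2 * (1 - 1/δ) = 2 := by ring
        rw [this, ENNReal.rpow_two, ENNReal.inv_mul_cancel (pow_ne_zero 2 h0)
          (ENNReal.pow_ne_top hV.ne), mul_one]
    _ ≤ _ := by gcongr

/-- Corollary 3.9: `‖T(∫₀ˣ h)‖_{β,w} ≤ C ∫₀^∞ h V⁻¹` for all nonnegative measurable `h` iff
`‖T_{V^{2(1-1/δ)}}((∫₀ˣ h^δ V)^{1/δ})‖_{β,w} ≤ C' ∫₀^∞ h v^{1-1/δ}` for all nonnegative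
measurable `h`. -/
theorem selfimprove_s_one_iterated (β : ℝ≥0∞) (hβ : 0 < β) (δ : ℝ) (hδ : 0 < δ) (hδ1 : δ ≤ 1)
    (T : (ℝ → ℝ≥0∞) → ℝ → ℝ≥0∞)
    (hT1 : ∀ (a : ℝ≥0∞) (f : ℝ → ℝ≥0∞), T (fun x => a * f x) = fun x => a * T f x)
    (hT2 : ∃ c : ℝ≥0∞, 0 < c ∧ c < ∞ ∧ ∀ f g : ℝ → ℝ≥0∞,
      (∀ᵐ x ∂(volume.restrict (Ioi (0:ℝ))), f x ≤ g x) →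
      ∀ᵐ x ∂(volume.restrict (Ioi (0:ℝ))), T f x ≤ c * T g x)
    (hT3 : ∃ c : ℝ≥0∞, 0 < c ∧ c < ∞ ∧ ∀ (f : ℝ → ℝ≥0∞) (a : ℝ≥0∞),
      ∀ᵐ x ∂(volume.restrict (Ioi (0:ℝ))),
        T (fun y => f y + a) x ≤ c * (T f x + a * T (fun _ => 1) x))
    (v w : ℝ → ℝ≥0∞) (hv : Measurable v) (hw : Measurable w)
    (hVfin : ∀ x > (0:ℝ), Vint v x < ∞) :
    (∃ C : ℝ≥0∞, C < ∞ ∧ ∀ h : ℝ → ℝ≥0∞, Measurable h →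
        Lnorm β w (T (fun x => ∫⁻ τ in Ioc (0:ℝ) x, h τ))
          ≤ C * ∫⁻ t in Ioi (0:ℝ), h t / Vint v t)
    ↔ (∃ C' : ℝ≥0∞, C' < ∞ ∧ ∀ h : ℝ → ℝ≥0∞, Measurable h →
        Lnorm β w (T (fun x =>
            (∫⁻ t in Ioc (0:ℝ) x, h t ^ δ * Vint v t) ^ (1/δ) *
              (Vint v x) ^ (2*(1 - 1/δ))))
          ≤ C' * ∫⁻ t in Ioi (0:ℝ), h t * v t ^ (1 - 1/δ)) := by
  constructor
  · rintro ⟨C, hC, H⟩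
    obtain ⟨c, hc0, hc, hmono⟩ := hT2
    refine ⟨c * C + 1, ENNReal.add_lt_top.2 ⟨ENNReal.mul_lt_top hc hC, by simp⟩, fun h hh => ?_⟩
    by_cases hfin : ∫⁻ t in Ioi (0:ℝ), h t * v t ^ (1 - 1/δ) = ∞
    · rw [hfin, ENNReal.mul_top (by simp)]
      exact le_top
    have hVm : Measurable (Vint v) := (Vint_mono v).measurable
    have hkm : Measurable fun t => h t * v t ^ (1 - 1/δ) := hh.mul (hv.pow_const _)
    have h1 := Lnorm_le β hβ w _ _ c hc.ne (hmono _
      (fun x => ∫⁻ t in Ioc (0:ℝ) x, h t * v t ^ (1 - 1/δ) * Vint v t)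
      ((ae_restrict_mem measurableSet_Ioi).mono
        fun x hx => fwd δ hδ hδ1 v h hv hh hVfin hfin x hx))
    refine h1.trans ?_
    have h2 := H _ (hkm.mul hVm)
    calc _ ≤ c * (C * ∫⁻ t in Ioi (0:ℝ), h t * v t ^ (1 - 1/δ)) := by
          gcongr
          refine h2.trans ?_
          gcongr with t
          simp only [Pi.mul_apply]
          rw [mul_div_assoc]
          exact mul_le_of_le_one_right zero_le ENNReal.div_self_le_one
      _ ≤ _ := by
          rw [← mul_assoc]
          gcongr
          exact le_self_add
  · rintro ⟨C, hC, H⟩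
    obtain ⟨c, hc0, hc, hmono⟩ := hT2
    have h4 : (4:ℝ≥0∞) ^ (1/δ) ≠ ∞ := ENNReal.rpow_ne_top_of_nonneg (by positivity) (by simp)
    refine ⟨c * 4 ^ (1/δ) * C * 8 + 1, ENNReal.add_lt_top.2 ⟨ENNReal.mul_lt_top
      (ENNReal.mul_lt_top (ENNReal.mul_lt_top hc h4.lt_top) hC) (by simp), by simp⟩,
      fun h hh => ?_⟩
    by_cases hfin : ∫⁻ t in Ioi (0:ℝ), h t / Vint v t = ∞
    · rw [hfin, ENNReal.mul_top (by simp)]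
      exact le_top
    have hgm : Measurable fun t => gfun v h t * v t ^ (1/δ) := (gmeas v h hh).mul (hv.pow_const _)
    have h1 := hmono _ _ ((ae_restrict_mem measurableSet_Ioi).mono
        fun x hx => bwd δ hδ v h hv hh hVfin hfin x hx)
    rw [hT1] at h1
    simp only [← mul_assoc] at h1
    refine (Lnorm_le β hβ w _ _ _ (ENNReal.mul_ne_top hc.ne h4) h1).trans ?_
    have h2 : ∫⁻ t in Ioi (0:ℝ), gfun v h t * v t ^ (1/δ) * v t ^ (1 - 1/δ) ≤
        8 * ∫⁻ t in Ioi (0:ℝ), h t / Vint v t := by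
      refine le_trans (le_of_eq ?_) (gint v h hv hh hVfin)
      refine lintegral_congr_ae ?_
      filter_upwards [ae_fin v hv hVfin] with t ht
      rcases eq_or_ne (v t) 0 with h0 | h0
      · rw [h0, ENNReal.zero_rpow_of_pos (by positivity)]; simp
      · rw [mul_assoc, ← ENNReal.rpow_add _ _ h0 ht.ne]; simp
    calc _ ≤ c * 4 ^ (1/δ) * (C * (8 * ∫⁻ t in Ioi (0:ℝ), h t / Vint v t)) := by
          gcongr
          refine (H _ hgm).trans ?_
          gcongr
      _ ≤ _ := by
          rw [← mul_assoc, ← mul_assoc]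
          gcongr
          exact le_self_add
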